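/- Let w be a finite word of length n and let u be a primitive word such that u² is a factor of w. Then 2|u| + M(u) ≤ n + 1, where M(u) is the number of integers q for which the small-circuit condition SC_w(u,q) holds. -/

import Mathlib

/-!
Write `p = |u|`. Since `u` is primitive, its `p` conjugates are pairwise distinct: an equality
between two of them gives a factorization `u = xy = yx` with `x, y` nonempty, and commuting
words are powers of a common word (`exists_wpow_of_comm`). Hence for `q ≥ p` the windows of
length `q + 1` of `u^ω` starting at the positions `0, …, p - 1` are pairwise distinct. If
`SC w u q` holds, they all occur in `w`, necessarily at distinct positions among the `n - q`
available ones, so `p + q ≤ n` (`SC.length_add_le`). Therefore `M(u)` counts integers in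
`[p, n - p]`, and `2p ≤ n` because `u²` is a factor of `w`.
-/

/-- `wpow u k` is the concatenation of `k` copies of the word `u`. -/
def wpow {α : Type*} (u : List α) : ℕ → List α
  | 0 => []
  | n + 1 => u ++ wpow u n

/-- A nonempty word is primitive if it is not a `k`-th power, `k ≥ 2`, of any word. -/
def Primitive {α : Type*} (u : List α) : Prop :=
  u ≠ [] ∧ ∀ (v : List α) (k : ℕ), 2 ≤ k → u ≠ wpow v k

/-- `v` is a rational power of exponent at least 2 of the nonempty word `p`:
`v = p^k p'` with `k ≥ 2` an integer and `p'` a (possibly empty) proper prefix of `p`. -/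
def IsRatPow {α : Type*} (p v : List α) : Prop :=
  p ≠ [] ∧ ∃ (k : ℕ) (p' : List α), 2 ≤ k ∧ p' <+: p ∧ p' ≠ p ∧ v = wpow p k ++ p'

/-- Two words are conjugate. -/
def Conj {α : Type*} (u v : List α) : Prop :=
  ∃ x y, u = x ++ y ∧ v = y ++ x

/-- The set of factors of a word. -/
def Fac {α : Type*} (w : List α) : Set (List α) := {v | v <:+: w}

/-- `PerFac u i` is the set `[u]_i` of length-`i` factors of the infinite periodic
word `u^ω` (equivalently, of `u^(i+1)` when `u` is nonempty). -/
def PerFac {α : Type*} (u : List α) (i : ℕ) : Set (List α) :=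
  {v | v.length = i ∧ v <:+: wpow u (i + 1)}

/-- The small-circuit condition `SC_w(u,q)`: `q ≥ |u|`, `[u]_q ⊆ Fac(w)` and
`[u]_{q+1} ⊆ Fac(w)`. -/
def SC {α : Type*} (w u : List α) (q : ℕ) : Prop :=
  u.length ≤ q ∧ PerFac u q ⊆ Fac w ∧ PerFac u (q + 1) ⊆ Fac w

/-- `M(u)`: the number of integers `q` for which `SC_w(u,q)` holds. -/
noncomputable def Mnum {α : Type*} (w u : List α) : ℕ :=
  Set.ncard {q : ℕ | SC w u q}

/-- `QClass_w(u)`: the set of factors of `w` that are rational powers of exponent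
at least 2 of some conjugate of `u`. -/
def QClass {α : Type*} (w u : List α) : Set (List α) :=
  {v | v <:+: w ∧ ∃ p, Conj u p ∧ IsRatPow p v}

/-- `RP(w)`: the number of distinct factors of `w` that are rational powers of
exponent at least 2 of some nonempty word. -/
noncomputable def RP {α : Type*} (w : List α) : ℕ :=
  Set.ncard {v | v <:+: w ∧ ∃ p, IsRatPow p v}

theorem wpow_add {α : Type*} (u : List α) (a b : ℕ) :
    wpow u (a + b) = wpow u a ++ wpow u b := by
  induction a with
  | zero => simp [wpow]
  | succ a ih => rw [Nat.succ_add]; simp [wpow, ih]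

theorem length_wpow {α : Type*} (u : List α) (k : ℕ) :
    (wpow u k).length = k * u.length := by
  induction k with
  | zero => simp [wpow]
  | succ k ih => simp [wpow, ih]; ring

/-- Commuting words are powers of a common word, by Euclid's algorithm on the lengths. -/
theorem exists_wpow_of_comm {α : Type*} (N : ℕ) (x y : List α)
    (hN : x.length + y.length ≤ N) (h : x ++ y = y ++ x) :
    ∃ (v : List α) (k m : ℕ), x = wpow v k ∧ y = wpow v m := by
  induction N generalizing x y with
  | zero =>
    have hx : x = [] := List.length_eq_zero_iff.1 (by omega)
    have hy : y = [] := List.length_eq_zero_iff.1 (by omega)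
    exact ⟨[], 0, 0, by simp [hx, wpow], by simp [hy, wpow]⟩
  | succ N ih =>
    by_cases hx : x = []
    · exact ⟨y, 0, 1, by simp [hx, wpow], by simp [wpow]⟩
    by_cases hy : y = []
    · exact ⟨x, 1, 0, by simp [wpow], by simp [hy, wpow]⟩
    have hx' := List.length_pos_iff.2 hx
    have hy' := List.length_pos_iff.2 hy
    rcases le_total x.length y.length with hl | hl
    · obtain ⟨z, rfl⟩ : x <+: y :=
        List.prefix_of_prefix_length_le (List.prefix_append x y) (h ▸ List.prefix_append y x) hl
      rw [List.append_assoc, List.append_cancel_left_eq] at h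
      rw [List.length_append] at hN
      obtain ⟨v, k, m, hk, hm⟩ := ih x z (by omega) h
      exact ⟨v, k, k + m, hk, by rw [wpow_add, ← hk, ← hm]⟩
    · obtain ⟨z, rfl⟩ : y <+: x :=
        List.prefix_of_prefix_length_le (List.prefix_append y x) (h ▸ List.prefix_append x y) hl
      rw [List.append_assoc, List.append_cancel_left_eq] at h
      rw [List.length_append] at hN
      obtain ⟨v, k, m, hk, hm⟩ := ih z y (by omega) h
      exact ⟨v, m + k, m, by rw [wpow_add, ← hk, ← hm], hm⟩

theorem Primitive.rotate_ne {α : Type*} {u : List α} (hu : Primitive u) {d : ℕ}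
    (hd : 0 < d) (hdu : d < u.length) : u.rotate d ≠ u := by
  intro h
  rw [List.rotate_eq_drop_append_take hdu.le] at h
  have hc : u.take d ++ u.drop d = u.drop d ++ u.take d := by
    rw [h, List.take_append_drop]
  obtain ⟨v, k, m, hk, hm⟩ := exists_wpow_of_comm _ _ _ le_rfl hc
  have hk0 : k ≠ 0 := by
    rintro rfl
    have := congrArg List.length hk
    rw [List.length_take, length_wpow] at this
    omega
  have hm0 : m ≠ 0 := by
    rintro rfl
    have := congrArg List.length hm
    simp [wpow] at this
    omega
  refine hu.2 v (k + m) (by omega) ?_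
  rw [wpow_add, ← hk, ← hm, List.take_append_drop]

theorem Primitive.rotate_ne_rotate {α : Type*} {u : List α} (hu : Primitive u) {i j : ℕ}
    (hij : i < j) (hj : j < u.length) : u.rotate i ≠ u.rotate j := by
  intro h
  have h2 : u.rotate j = (u.rotate (j - i)).rotate i := by
    rw [List.rotate_rotate]; congr 1; omega
  rw [h2] at h
  exact hu.rotate_ne (by omega) (by omega) (List.rotate_injective i h).symm

/-- The length-`|u|` windows of `u^ω` are the conjugates of `u`. -/
theorem take_drop_wpow {α : Type*} (u : List α) (k j : ℕ) (hj : j ≤ u.length) :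
    ((wpow u (k + 2)).drop j).take u.length = u.rotate j := by
  rw [List.rotate_eq_drop_append_take hj]
  simp only [wpow]
  rw [List.drop_append_of_le_length hj, List.take_append, List.length_drop,
    List.take_of_length_le (by simp), List.take_append_of_le_length (by omega)]
  congr 2
  omega

theorem SC.length_add_le {α : Type*} {w u : List α} (hu : Primitive u) {q : ℕ}
    (h : SC w u q) : u.length + q ≤ w.length := by
  obtain ⟨hq, -, h⟩ := h
  have hp : 0 < u.length := List.length_pos_iff.2 hu.1
  have key : ∀ j, ∃ g, j < u.length → g < w.length - q ∧
      (w.drop g).take (q + 1) = ((wpow u (q + 2)).drop j).take (q + 1) := by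
    intro j
    by_cases hj : j < u.length
    · have hmem : ((wpow u (q + 2)).drop j).take (q + 1) ∈ PerFac u (q + 1) := by
        refine ⟨?_, (List.take_prefix _ _).isInfix.trans (List.drop_suffix _ _).isInfix⟩
        rw [List.length_take, List.length_drop, length_wpow]
        have : q + 1 ≤ (q + 1) * u.length := Nat.le_mul_of_pos_right _ hp
        have : (q + 2) * u.length = (q + 1) * u.length + u.length := by ring
        omega
      have hlen := hmem.1
      obtain ⟨s, t, hst⟩ := h hmem
      generalize ((wpow u (q + 2)).drop j).take (q + 1) = v at *
      refine ⟨s.length, fun _ => ⟨?_, ?_⟩⟩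
      · rw [← hst]; simp; omega
      · rw [← hst, List.append_assoc, List.drop_left, ← hlen, List.take_left]
    · exact ⟨0, fun h => absurd h hj⟩
  choose g hg using key
  -- Equal positions in `w` give equal windows, hence equal conjugates after truncation.
  have hrot : ∀ i j, i < u.length → j < u.length → g i = g j → u.rotate i = u.rotate j := by
    intro i j hi hj hij
    have e : ((wpow u (q + 2)).drop i).take (q + 1) = ((wpow u (q + 2)).drop j).take (q + 1) := by
      rw [← (hg i hi).2, ← (hg j hj).2, hij]
    have e := congrArg (List.take u.length) e
    rw [List.take_take, List.take_take, min_eq_left (by omega),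
      take_drop_wpow u q i hi.le, take_drop_wpow u q j hj.le] at e
    exact e
  have hcard : (Finset.range u.length).card ≤ (Finset.range (w.length - q)).card := by
    refine Finset.card_le_card_of_injOn g (fun j hj => ?_) (fun i hi j hj hij => ?_)
    · simpa using (hg j (by simpa using hj)).1
    · have hi : i < u.length := by simpa using hi
      have hj : j < u.length := by simpa using hj
      have e := hrot i j hi hj hij
      rcases lt_trichotomy i j with hl | hl | hl
      · exact absurd e (hu.rotate_ne_rotate hl hj)
      · exact hl
      · exact absurd e.symm (hu.rotate_ne_rotate hl hi)
  simp only [Finset.card_range] at hcard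
  omega

/-- If `u` is primitive and `u²` is a factor of `w`, then `2|u| + M(u) ≤ n + 1`. -/
theorem stmt_10 {α : Type*} (w u : List α) (n : ℕ) (hn : w.length = n)
    (hu : Primitive u) (hsq : (u ++ u) <:+: w) :
    2 * u.length + Mnum w u ≤ n + 1 := by
  have h2 := hsq.length_le
  rw [List.length_append, hn] at h2
  have hsub : {q : ℕ | SC w u q} ⊆ ↑(Finset.Icc u.length (n - u.length)) := by
    intro q hq
    have h1 := SC.length_add_le hu hq
    have h3 : u.length ≤ q := hq.1
    simp only [Finset.coe_Icc, Set.mem_Icc]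
    omega
  have hc := Set.ncard_le_ncard hsub (Finset.finite_toSet _)
  rw [Set.ncard_coe_finset, Nat.card_Icc] at hc
  unfold Mnum
  omega
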